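/- arXiv:2507.02077 — 2 statements merged into one kernel-verified Lean document; each statement's English description precedes it below -/
import Mathlib

section
/- The function T satisfies the equation a ΔT + ∇a · ∇T = 0 on U; that is, a(∂₁₁T + ∂₂₂T) + (∂₁a)(∂₁T) + (∂₂a)(∂₂T) = 0 at every point of U. -/
/-- Partial derivative in direction `i` of a function on `ℝ²`. -/
noncomputable def pd (i : Fin 2) (f : EuclideanSpace ℝ (Fin 2) → ℝ)
    (x : EuclideanSpace ℝ (Fin 2)) : ℝ :=
  fderiv ℝ f x (EuclideanSpace.single i 1)

/-!
The derivative `X f (x) = Df(x)(A x)` along a linear vector field satisfies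
`D(X f) = X(Df) + Df ∘ A`. When `A` is skew-adjoint, the terms containing `A` cancel both in the
trace defining the Laplacian and in the inner product of two gradients, so that `X` is a derivation
of the bilinear operator `L_a f = a Δf + ⟪∇a, ∇f⟫`, namely
`X (L_a f) = L_{X a} f + L_a (X f)`.
If `X a = 0`, then `X` maps solutions of `L_a f = 0` to solutions. On the plane, `A` is the rotation
by a right angle, `X a = 0` says that `a` is radial, and `T = X u`.
-/

section

open Filter InnerProductSpace Laplacian Topology
open scoped Gradient RealInnerProductSpace

section LinearVectorField

variable {E F G : Type*} [NormedAddCommGroup E] [NormedSpace ℝ E]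
  [NormedAddCommGroup F] [NormedSpace ℝ F] [NormedAddCommGroup G] [NormedSpace ℝ G]
  {A : E →L[ℝ] E} {f : E → F} {x : E}

theorem differentiableAt_fderiv (hf : ContDiffAt ℝ 2 f x) : DifferentiableAt ℝ (fderiv ℝ f) x :=
  (hf.fderiv_right (m := 1) le_rfl).differentiableAt one_ne_zero

/-- The derivative of `f` along the linear vector field `x ↦ A x`. For skew-adjoint `A` this is the
derivative under an infinitesimal rotation about the origin. -/
noncomputable def derivAlong (A : E →L[ℝ] E) (f : E → F) (x : E) : F :=
  fderiv ℝ f x (A x)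

theorem contDiffAt_derivAlong {m n : WithTop ℕ∞} (hf : ContDiffAt ℝ n f x) (hmn : m + 1 ≤ n) :
    ContDiffAt ℝ m (derivAlong A f) x :=
  (hf.fderiv_right hmn).clm_apply A.contDiff.contDiffAt

theorem derivAlong_clm_comp (L : F →L[ℝ] G) (hf : DifferentiableAt ℝ f x) :
    derivAlong A (fun y ↦ L (f y)) x = L (derivAlong A f x) :=
  DFunLike.congr_fun (L.hasFDerivAt.comp x hf.hasFDerivAt).fderiv (A x)

theorem fderiv_derivAlong (hf : ContDiffAt ℝ 2 f x) :
    fderiv ℝ (derivAlong A f) x = derivAlong A (fderiv ℝ f) x + (fderiv ℝ f x).comp A := by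
  have hsymm : IsSymmSndFDerivAt ℝ f x := hf.isSymmSndFDerivAt (by simp)
  ext v
  calc fderiv ℝ (fun y ↦ fderiv ℝ f y (A y)) x v
      = fderiv ℝ f x (A v) + fderiv ℝ (fderiv ℝ f) x v (A x) := by
        rw [fderiv_clm_apply (differentiableAt_fderiv hf) A.differentiableAt, A.fderiv]
        rfl
    _ = fderiv ℝ (fderiv ℝ f) x (A x) v + fderiv ℝ f x (A v) := by
        rw [hsymm v (A x), add_comm]

theorem fderiv_fderiv_derivAlong (hf : ContDiffAt ℝ 3 f x) (v w : E) :
    fderiv ℝ (fderiv ℝ (derivAlong A f)) x v w =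
      derivAlong A (fderiv ℝ (fderiv ℝ f)) x v w +
        (fderiv ℝ (fderiv ℝ f) x (A v) w + fderiv ℝ (fderiv ℝ f) x v (A w)) := by
  have hf' : ContDiffAt ℝ 2 (fderiv ℝ f) x := hf.fderiv_right (by norm_num)
  have hd : DifferentiableAt ℝ (fderiv ℝ f) x := hf'.differentiableAt two_ne_zero
  have hX : DifferentiableAt ℝ (derivAlong A (fderiv ℝ f)) x :=
    (contDiffAt_derivAlong (m := 1) hf' (by norm_num)).differentiableAt one_ne_zero
  have hnear : fderiv ℝ (derivAlong A f) =ᶠ[𝓝 x]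
      fun y ↦ derivAlong A (fderiv ℝ f) y + (fderiv ℝ f y).comp A := by
    filter_upwards [hf.eventually (by simp)] with y hy
    exact fderiv_derivAlong (hy.of_le (by norm_num))
  have hcomp : fderiv ℝ (fun y ↦ (fderiv ℝ f y).comp A) x v w =
      fderiv ℝ (fderiv ℝ f) x v (A w) := by
    rw [fderiv_clm_comp hd (differentiableAt_const A)]
    simp
  rw [hnear.fderiv_eq, fderiv_fun_add hX (hd.clm_comp (differentiableAt_const A)),
    add_apply, add_apply, hcomp, fderiv_derivAlong hf']
  simp [add_assoc]

end LinearVectorField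

section Gradient

variable {E : Type*} [NormedAddCommGroup E] [InnerProductSpace ℝ E] [CompleteSpace E]
  {A : E →L[ℝ] E} {f g : E → ℝ} {x : E}

theorem differentiableAt_gradient (hf : ContDiffAt ℝ 2 f x) : DifferentiableAt ℝ (∇ f) x :=
  (toDual ℝ E).symm.differentiableAt.comp x (differentiableAt_fderiv hf)

theorem gradient_derivAlong (hf : ContDiffAt ℝ 2 f x) :
    ∇ (derivAlong A f) x = derivAlong A (∇ f) x + A.adjoint (∇ f x) := by
  have hX (v : E) : ⟪derivAlong A (∇ f) x, v⟫ = derivAlong A (fderiv ℝ f) x v :=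
    calc ⟪derivAlong A (∇ f) x, v⟫
        = derivAlong A (fun y ↦ ⟪v, ∇ f y⟫) x := by
          rw [real_inner_comm]
          exact (derivAlong_clm_comp (innerSL ℝ v) (differentiableAt_gradient hf)).symm
      _ = derivAlong A (fun y ↦ fderiv ℝ f y v) x := by
          simp only [inner_gradient_right, conj_trivial]
      _ = derivAlong A (fderiv ℝ f) x v :=
          derivAlong_clm_comp (ContinuousLinearMap.apply ℝ ℝ v) (differentiableAt_fderiv hf)
  refine ext_inner_right ℝ fun v ↦ ?_
  rw [inner_gradient_left, fderiv_derivAlong hf, inner_add_left, hX,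
    ContinuousLinearMap.adjoint_inner_left, inner_gradient_left]
  rfl

theorem derivAlong_inner_gradient (hA : A ∈ skewAdjoint (E →L[ℝ] E))
    (hf : ContDiffAt ℝ 2 f x) (hg : ContDiffAt ℝ 2 g x) :
    derivAlong A (fun y ↦ ⟪∇ f y, ∇ g y⟫) x =
      ⟪∇ (derivAlong A f) x, ∇ g x⟫ + ⟪∇ f x, ∇ (derivAlong A g) x⟫ := by
  have hskew : A.adjoint = -A := hA
  have hcancel : ⟪A.adjoint (∇ f x), ∇ g x⟫ + ⟪∇ f x, A.adjoint (∇ g x)⟫ = 0 := by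
    rw [ContinuousLinearMap.adjoint_inner_left, hskew]
    simp
  rw [derivAlong, fderiv_inner_apply ℝ (differentiableAt_gradient hf)
    (differentiableAt_gradient hg), gradient_derivAlong hf, gradient_derivAlong hg,
    inner_add_left, inner_add_right]
  simp only [derivAlong]
  linarith

end Gradient

section Trace

variable {ι E F : Type*} [Fintype ι] [NormedAddCommGroup E] [InnerProductSpace ℝ E]
  [CompleteSpace E] [NormedAddCommGroup F] [NormedSpace ℝ F]

theorem sum_apply_adjoint (b : OrthonormalBasis ι ℝ E) (B : E →L[ℝ] E →L[ℝ] F) (A : E →L[ℝ] E) :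
    ∑ i, B (b i) (A.adjoint (b i)) = ∑ i, B (A (b i)) (b i) := by
  calc ∑ i, B (b i) (A.adjoint (b i))
      = ∑ i, ∑ j, ⟪b i, A (b j)⟫ • B (b i) (b j) := by
        refine Finset.sum_congr rfl fun i _ ↦ ?_
        conv_lhs => rw [← b.sum_repr' (A.adjoint (b i))]
        simp [ContinuousLinearMap.adjoint_inner_right, real_inner_comm]
    _ = ∑ j, ∑ i, ⟪b i, A (b j)⟫ • B (b i) (b j) := Finset.sum_comm
    _ = ∑ j, B (A (b j)) (b j) := by
        refine Finset.sum_congr rfl fun j _ ↦ ?_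
        conv_rhs => rw [← b.sum_repr' (A (b j))]
        simp

theorem sum_apply_add_apply_eq_zero_of_mem_skewAdjoint (b : OrthonormalBasis ι ℝ E)
    (B : E →L[ℝ] E →L[ℝ] F) {A : E →L[ℝ] E} (hA : A ∈ skewAdjoint (E →L[ℝ] E)) :
    ∑ i, (B (A (b i)) (b i) + B (b i) (A (b i))) = 0 := by
  have hskew : A.adjoint = -A := hA
  rw [Finset.sum_add_distrib, ← sum_apply_adjoint, hskew]
  simp

end Trace

section Laplacian

variable {E F : Type*} [NormedAddCommGroup E] [InnerProductSpace ℝ E] [FiniteDimensional ℝ E]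
  [NormedAddCommGroup F] [NormedSpace ℝ F] {A : E →L[ℝ] E} {x : E}

/-- The trace of a bilinear map with respect to the inner product. It is a continuous linear
functional of the bilinear map, and its value on the second derivative is the Laplacian. -/
noncomputable def metricTrace : (E →L[ℝ] E →L[ℝ] F) →L[ℝ] F :=
  ∑ i, (ContinuousLinearMap.apply ℝ F (stdOrthonormalBasis ℝ E i)).comp
    (ContinuousLinearMap.apply ℝ (E →L[ℝ] F) (stdOrthonormalBasis ℝ E i))

theorem metricTrace_apply (B : E →L[ℝ] E →L[ℝ] F) :
    metricTrace B = ∑ i, B (stdOrthonormalBasis ℝ E i) (stdOrthonormalBasis ℝ E i) := by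
  simp [metricTrace]

theorem laplacian_eq_metricTrace (f : E → F) :
    Δ f = fun x ↦ metricTrace (fderiv ℝ (fderiv ℝ f) x) := by
  simp [laplacian_eq_iteratedFDeriv_stdOrthonormalBasis, iteratedFDeriv_two_apply,
    metricTrace_apply]

theorem differentiableAt_laplacian {f : E → F} (hf : ContDiffAt ℝ 3 f x) :
    DifferentiableAt ℝ (Δ f) x := by
  have hf' : ContDiffAt ℝ 2 (fderiv ℝ f) x := hf.fderiv_right (by norm_num)
  rw [laplacian_eq_metricTrace]
  exact DifferentiableAt.comp x (metricTrace (E := E) (F := F)).differentiableAt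
    (differentiableAt_fderiv hf')

theorem derivAlong_laplacian {f : E → F} (hf : ContDiffAt ℝ 3 f x) :
    derivAlong A (Δ f) x = metricTrace (derivAlong A (fderiv ℝ (fderiv ℝ f)) x) := by
  have hf' : ContDiffAt ℝ 2 (fderiv ℝ f) x := hf.fderiv_right (by norm_num)
  rw [laplacian_eq_metricTrace]
  exact derivAlong_clm_comp (metricTrace (E := E) (F := F)) (differentiableAt_fderiv hf')

theorem laplacian_derivAlong (hA : A ∈ skewAdjoint (E →L[ℝ] E)) {f : E → F}
    (hf : ContDiffAt ℝ 3 f x) : Δ (derivAlong A f) x = derivAlong A (Δ f) x := by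
  rw [derivAlong_laplacian hf]
  simp only [laplacian_eq_metricTrace, metricTrace_apply, fderiv_fderiv_derivAlong hf]
  rw [Finset.sum_add_distrib, sum_apply_add_apply_eq_zero_of_mem_skewAdjoint _ _ hA, add_zero]

end Laplacian

section WeightedLaplacian

variable {E : Type*} [NormedAddCommGroup E] [InnerProductSpace ℝ E] [FiniteDimensional ℝ E]
  {A : E →L[ℝ] E} {a f : E → ℝ} {x : E}

/-- The operator `f ↦ div (a ∇f)` with weight `a`, written in the expanded form
`a Δf + ⟪∇a, ∇f⟫`. -/
noncomputable def weightedLaplacian (a f : E → ℝ) (x : E) : ℝ :=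
  a x * Δ f x + ⟪∇ a x, ∇ f x⟫

theorem derivAlong_weightedLaplacian (hA : A ∈ skewAdjoint (E →L[ℝ] E))
    (ha : ContDiffAt ℝ 2 a x) (hf : ContDiffAt ℝ 3 f x) :
    derivAlong A (weightedLaplacian a f) x =
      weightedLaplacian (derivAlong A a) f x + weightedLaplacian a (derivAlong A f) x := by
  have hf₂ : ContDiffAt ℝ 2 f x := hf.of_le (by norm_num)
  have ha' : DifferentiableAt ℝ a x := ha.differentiableAt two_ne_zero
  have hΔ : DifferentiableAt ℝ (Δ f) x := differentiableAt_laplacian hf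
  have hinner : DifferentiableAt ℝ (fun y ↦ ⟪∇ a y, ∇ f y⟫) x :=
    (differentiableAt_gradient ha).inner ℝ (differentiableAt_gradient hf₂)
  calc derivAlong A (weightedLaplacian a f) x
      = a x * derivAlong A (Δ f) x + derivAlong A a x * Δ f x +
          derivAlong A (fun y ↦ ⟪∇ a y, ∇ f y⟫) x := by
        change fderiv ℝ (fun y ↦ a y * Δ f y + ⟪∇ a y, ∇ f y⟫) x (A x) = _
        rw [fderiv_fun_add (ha'.fun_mul hΔ) hinner, fderiv_fun_mul ha' hΔ]
        simp [derivAlong, mul_comm]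
    _ = weightedLaplacian (derivAlong A a) f x + weightedLaplacian a (derivAlong A f) x := by
        rw [derivAlong_inner_gradient hA ha hf₂, ← laplacian_derivAlong hA hf, weightedLaplacian,
          weightedLaplacian]
        ring

theorem stmt2_general {U : Set E} (hU : IsOpen U) (hA : A ∈ skewAdjoint (E →L[ℝ] E))
    (ha : ContDiffOn ℝ 2 a U) (hf : ContDiffOn ℝ 3 f U) (hAa : ∀ y ∈ U, derivAlong A a y = 0)
    (hsol : ∀ y ∈ U, weightedLaplacian a f y = 0) :
    ∀ x ∈ U, weightedLaplacian a (derivAlong A f) x = 0 := by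
  intro x hx
  have hUx : U ∈ 𝓝 x := hU.mem_nhds hx
  have hAa' : derivAlong A a =ᶠ[𝓝 x] fun _ ↦ 0 := eventually_of_mem hUx hAa
  have hsol' : weightedLaplacian a f =ᶠ[𝓝 x] fun _ ↦ 0 := eventually_of_mem hUx hsol
  have hweight : weightedLaplacian (derivAlong A a) f x = 0 := by
    simp [weightedLaplacian, hAa x hx, hAa'.gradient_eq]
  have hderiv : derivAlong A (weightedLaplacian a f) x = 0 := by
    simp [derivAlong, hsol'.fderiv_eq]
  simpa [hweight, hderiv] using
    (derivAlong_weightedLaplacian hA (ha.contDiffAt hUx) (hf.contDiffAt hUx)).symm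

end WeightedLaplacian

section Plane

variable {a f : EuclideanSpace ℝ (Fin 2) → ℝ} {x : EuclideanSpace ℝ (Fin 2)}

/-- The rotation of the plane by a right angle, counterclockwise. It generates the rotations about
the origin, so that `derivAlong quarterTurn` is the angular derivative. -/
noncomputable def quarterTurn : EuclideanSpace ℝ (Fin 2) →L[ℝ] EuclideanSpace ℝ (Fin 2) :=
  Matrix.toEuclideanCLM (𝕜 := ℝ) !![0, -1; 1, 0]

theorem quarterTurn_mem_skewAdjoint :
    quarterTurn ∈ skewAdjoint (EuclideanSpace ℝ (Fin 2) →L[ℝ] EuclideanSpace ℝ (Fin 2)) := by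
  have hM : star !![(0 : ℝ), -1; 1, 0] = -!![0, -1; 1, 0] := by
    ext i j
    fin_cases i <;> fin_cases j <;> simp [Matrix.star_apply]
  rw [skewAdjoint.mem_iff, quarterTurn, ← map_star, hM, map_neg]

theorem derivAlong_quarterTurn :
    derivAlong quarterTurn f x = -(x 1) * pd 0 f x + x 0 * pd 1 f x := by
  have hturn : quarterTurn x =
      -(x 1) • EuclideanSpace.single 0 1 + x 0 • EuclideanSpace.single 1 1 := by
    ext i
    fin_cases i <;> simp [quarterTurn, Matrix.ofLp_toEuclideanCLM, Matrix.mulVec, dotProduct]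
  rw [derivAlong, hturn, map_add, map_smul, map_smul, smul_eq_mul, smul_eq_mul, pd, pd]

theorem pd_pd (hf : ContDiffAt ℝ 2 f x) (i j : Fin 2) :
    pd i (pd j f) x =
      fderiv ℝ (fderiv ℝ f) x (EuclideanSpace.single i 1) (EuclideanSpace.single j 1) := by
  change fderiv ℝ (fun y ↦ fderiv ℝ f y (EuclideanSpace.single j 1)) x _ = _
  rw [fderiv_clm_apply (differentiableAt_fderiv hf) (differentiableAt_const _)]
  simp

theorem laplacian_eq_pd (hf : ContDiffAt ℝ 2 f x) :
    Δ f x = pd 0 (pd 0 f) x + pd 1 (pd 1 f) x := by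
  rw [pd_pd hf, pd_pd hf,
    laplacian_eq_iteratedFDeriv_orthonormalBasis f (EuclideanSpace.basisFun (Fin 2) ℝ)]
  simp [iteratedFDeriv_two_apply]

theorem inner_gradient_eq_pd : ⟪∇ a x, ∇ f x⟫ = pd 0 a x * pd 0 f x + pd 1 a x * pd 1 f x := by
  rw [← (EuclideanSpace.basisFun (Fin 2) ℝ).sum_inner_mul_inner]
  simp [inner_gradient_left, inner_gradient_right, pd]

theorem weightedLaplacian_eq_pd (hf : ContDiffAt ℝ 2 f x) :
    weightedLaplacian a f x = a x * (pd 0 (pd 0 f) x + pd 1 (pd 1 f) x) +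
      (pd 0 a x * pd 0 f x + pd 1 a x * pd 1 f x) := by
  rw [weightedLaplacian, laplacian_eq_pd hf, inner_gradient_eq_pd]

theorem forall_weightedLaplacian_eq_zero_iff_pd {U : Set (EuclideanSpace ℝ (Fin 2))}
    (hf : ∀ x ∈ U, ContDiffAt ℝ 2 f x) :
    (∀ x ∈ U, weightedLaplacian a f x = 0) ↔
      ∀ x ∈ U, a x * (pd 0 (pd 0 f) x + pd 1 (pd 1 f) x) +
        (pd 0 a x * pd 0 f x + pd 1 a x * pd 1 f x) = 0 :=
  forall₂_congr fun x hx ↦ by rw [weightedLaplacian_eq_pd (hf x hx)]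

end Plane

end

/-- Lemma 3.1 (first part): the tangential quantity `T = -x₂ u₁ + x₁ u₂` satisfies
`a ΔT + ∇a · ∇T = 0` on `U`. -/
theorem stmt2 (U : Set (EuclideanSpace ℝ (Fin 2))) (hU : IsOpen U)
    (a u : EuclideanSpace ℝ (Fin 2) → ℝ)
    (ha : ContDiffOn ℝ (⊤ : ℕ∞) a U) (hapos : ∀ x ∈ U, 0 < a x)
    (hrad : ∀ x ∈ U, -(x 1) * pd 0 a x + x 0 * pd 1 a x = 0)
    (hu : ContDiffOn ℝ (⊤ : ℕ∞) u U)
    (heq : ∀ x ∈ U, a x * (pd 0 (pd 0 u) x + pd 1 (pd 1 u) x)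
      + (pd 0 a x * pd 0 u x + pd 1 a x * pd 1 u x) = 0)
    (T : EuclideanSpace ℝ (Fin 2) → ℝ)
    (hT : ∀ x, T x = -(x 1) * pd 0 u x + x 0 * pd 1 u x) :
    ∀ x ∈ U, a x * (pd 0 (pd 0 T) x + pd 1 (pd 1 T) x)
      + (pd 0 a x * pd 0 T x + pd 1 a x * pd 1 T x) = 0 := by
  have ha₂ : ContDiffOn ℝ 2 a U := mod_cast contDiffOn_infty.1 ha 2
  have hu₃ : ContDiffOn ℝ 3 u U := mod_cast contDiffOn_infty.1 hu 3
  have hu_at (x) (hx : x ∈ U) : ContDiffAt ℝ 3 u x := hu₃.contDiffAt (hU.mem_nhds hx)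
  have hsol : ∀ x ∈ U, weightedLaplacian a u x = 0 :=
    (forall_weightedLaplacian_eq_zero_iff_pd fun x hx ↦ (hu_at x hx).of_le (by norm_num)).2 heq
  obtain rfl : T = derivAlong quarterTurn u := funext fun x ↦ by rw [hT, derivAlong_quarterTurn]
  exact (forall_weightedLaplacian_eq_zero_iff_pd fun x hx ↦
    contDiffAt_derivAlong (hu_at x hx) (by norm_num)).1 <|
      stmt2_general hU quarterTurn_mem_skewAdjoint ha₂ hu₃
        (by simpa only [derivAlong_quarterTurn] using hrad) hsol
end

section
/- The function R satisfies the equation a ΔR − ∇a · ∇R = 0 on U; that is, a(∂₁₁R + ∂₂₂R) − (∂₁a)(∂₁R) − (∂₂a)(∂₂R) = 0 at every point of U. -/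
/-! The idea is to recognize `R` as a conjugate of the angular derivative `T` of `u`: the equation
for `u` and the radiality of `a` yield `∂₀ R = -a ∂₁ T` and `∂₁ R = a ∂₀ T`. Equating the
mixed partial derivatives of `T` then gives `div (a⁻¹ ∇R) = 0` where `a ≠ 0`, and this is
`a ΔR - ∇a · ∇R = 0` after multiplication by `a²`; substituting the conjugacy relations directly
into the latter form avoids the division. -/

open Topology

section PartialDerivatives

variable {f g : EuclideanSpace ℝ (Fin 2) → ℝ} {x : EuclideanSpace ℝ (Fin 2)}

theorem pd_congr_of_eventuallyEq (h : f =ᶠ[𝓝 x] g) (i : Fin 2) : pd i f x = pd i g x := by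
  rw [pd, pd, h.fderiv_eq]

theorem pd_add (hf : DifferentiableAt ℝ f x) (hg : DifferentiableAt ℝ g x) (i : Fin 2) :
    pd i (fun y => f y + g y) x = pd i f x + pd i g x := by
  rw [pd, fderiv_fun_add hf hg, add_apply, pd, pd]

theorem pd_neg (f : EuclideanSpace ℝ (Fin 2) → ℝ) (x : EuclideanSpace ℝ (Fin 2)) (i : Fin 2) :
    pd i (fun y => -f y) x = -pd i f x := by
  rw [pd, fderiv_fun_neg, neg_apply, pd]

theorem pd_mul (hf : DifferentiableAt ℝ f x) (hg : DifferentiableAt ℝ g x) (i : Fin 2) :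
    pd i (fun y => f y * g y) x = pd i f x * g x + f x * pd i g x := by
  simp only [pd, fderiv_fun_mul hf hg, add_apply, smul_apply, smul_eq_mul]
  ring

theorem pd_coord (i j : Fin 2) (x : EuclideanSpace ℝ (Fin 2)) :
    pd i (fun y => y j) x = if j = i then 1 else 0 := by
  have hderiv : fderiv ℝ (fun y : EuclideanSpace ℝ (Fin 2) => y j) x = EuclideanSpace.proj j :=
    (EuclideanSpace.proj (𝕜 := ℝ) j).fderiv
  simp [pd, hderiv]

theorem pd_coord_mul (hf : DifferentiableAt ℝ f x) (i j : Fin 2) :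
    pd i (fun y => y j * f y) x = (if j = i then 1 else 0) * f x + x j * pd i f x := by
  rw [pd_mul (by fun_prop) hf, pd_coord]

theorem differentiableAt_coord_mul (hf : DifferentiableAt ℝ f x) (j : Fin 2) :
    DifferentiableAt ℝ (fun y => y j * f y) x := by
  fun_prop

theorem contDiffAt_pd {m n : WithTop ℕ∞} (hf : ContDiffAt ℝ n f x) (hmn : m + 1 ≤ n) (i : Fin 2) :
    ContDiffAt ℝ m (pd i f) x :=
  (hf.fderiv_right hmn).clm_apply contDiffAt_const

theorem differentiableAt_pd (hf : ContDiffAt ℝ 2 f x) (i : Fin 2) :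
    DifferentiableAt ℝ (pd i f) x :=
  (contDiffAt_pd hf one_add_one_eq_two.le i).differentiableAt one_ne_zero

theorem pd_pd_eq_fderiv_fderiv (hf : DifferentiableAt ℝ (fderiv ℝ f) x) (i j : Fin 2) :
    pd i (pd j f) x =
      fderiv ℝ (fderiv ℝ f) x (EuclideanSpace.single i 1) (EuclideanSpace.single j 1) := by
  have hderiv := hf.hasFDerivAt.clm_apply (hasFDerivAt_const (EuclideanSpace.single j (1 : ℝ)) x)
  rw [pd, show pd j f = fun y => fderiv ℝ f y (EuclideanSpace.single j 1) from rfl, hderiv.fderiv]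
  simp

theorem pd_comm (hf : ContDiffAt ℝ 2 f x) (i j : Fin 2) : pd i (pd j f) x = pd j (pd i f) x := by
  have hdiff : DifferentiableAt ℝ (fderiv ℝ f) x :=
    (hf.fderiv_right one_add_one_eq_two.le).differentiableAt one_ne_zero
  have hsymm : IsSymmSndFDerivAt ℝ f x := hf.isSymmSndFDerivAt (by simp)
  rw [pd_pd_eq_fderiv_fderiv hdiff, pd_pd_eq_fderiv_fderiv hdiff, hsymm]

end PartialDerivatives

/-- The derivative of `u` along the rotation field about the origin, i.e. the polar derivative
`∂u/∂θ`. -/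
noncomputable def angularDeriv (u : EuclideanSpace ℝ (Fin 2) → ℝ) (x : EuclideanSpace ℝ (Fin 2)) :
    ℝ :=
  -(x 1) * pd 0 u x + x 0 * pd 1 u x

/-- The derivative of `u` along the Euler (dilation) field, i.e. `r ∂u/∂r` in polar coordinates. -/
noncomputable def eulerDeriv (u : EuclideanSpace ℝ (Fin 2) → ℝ) (x : EuclideanSpace ℝ (Fin 2)) :
    ℝ :=
  x 0 * pd 0 u x + x 1 * pd 1 u x

/-- `R` is conjugate to `T` at `x` with weight `a`: the Cauchy–Riemann equations weighted by `a`
hold there, that is, `∇R` is `a ∇T` rotated by a quarter turn. For `a = 1` this says that `T + i R`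
is holomorphic to first order. -/
structure IsConjugateAt (a T R : EuclideanSpace ℝ (Fin 2) → ℝ) (x : EuclideanSpace ℝ (Fin 2)) :
    Prop where
  pd_zero_eq : pd 0 R x = -(a x * pd 1 T x)
  pd_one_eq : pd 1 R x = a x * pd 0 T x

theorem IsConjugateAt.congr_of_eventuallyEq {a T R R' : EuclideanSpace ℝ (Fin 2) → ℝ}
    {x : EuclideanSpace ℝ (Fin 2)} (h : IsConjugateAt a T R x) (hR : R' =ᶠ[𝓝 x] R) :
    IsConjugateAt a T R' x :=
  ⟨pd_congr_of_eventuallyEq hR 0 ▸ h.pd_zero_eq, pd_congr_of_eventuallyEq hR 1 ▸ h.pd_one_eq⟩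

section Derivations

variable {a u : EuclideanSpace ℝ (Fin 2) → ℝ} {x : EuclideanSpace ℝ (Fin 2)}

theorem contDiffAt_angularDeriv {m n : WithTop ℕ∞} (hu : ContDiffAt ℝ n u x) (hmn : m + 1 ≤ n) :
    ContDiffAt ℝ m (angularDeriv u) x := by
  have hpd := contDiffAt_pd hu hmn
  exact ((contDiffAt_piLp_apply 2).neg.mul (hpd 0)).add ((contDiffAt_piLp_apply 2).mul (hpd 1))

theorem differentiableAt_eulerDeriv (hu : ContDiffAt ℝ 2 u x) :
    DifferentiableAt ℝ (eulerDeriv u) x := by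
  have hpd := differentiableAt_pd hu
  exact (differentiableAt_coord_mul (hpd 0) 0).add (differentiableAt_coord_mul (hpd 1) 1)

theorem pd_eulerDeriv (hu : ContDiffAt ℝ 2 u x) (i : Fin 2) :
    pd i (eulerDeriv u) x = pd i u x + eulerDeriv (pd i u) x := by
  have hpd := differentiableAt_pd hu
  have hexpand : pd i (eulerDeriv u) x =
      ((if 0 = i then 1 else 0) * pd 0 u x + x 0 * pd i (pd 0 u) x) +
        ((if 1 = i then 1 else 0) * pd 1 u x + x 1 * pd i (pd 1 u) x) := by
    unfold eulerDeriv
    rw [pd_add (differentiableAt_coord_mul (hpd 0) 0) (differentiableAt_coord_mul (hpd 1) 1),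
      pd_coord_mul (hpd 0), pd_coord_mul (hpd 1)]
  rw [hexpand, pd_comm hu i 0, pd_comm hu i 1, eulerDeriv]
  fin_cases i <;>
    simp only [Fin.zero_eta, Fin.mk_one, zero_ne_one, one_ne_zero, ↓reduceIte] <;> ring

theorem pd_angularDeriv (hu : ContDiffAt ℝ 2 u x) (i : Fin 2) :
    pd i (angularDeriv u) x =
      (if 0 = i then pd 1 u x else -pd 0 u x) + angularDeriv (pd i u) x := by
  have hpd := differentiableAt_pd hu
  have hexpand : pd i (angularDeriv u) x =
      -((if 1 = i then 1 else 0) * pd 0 u x + x 1 * pd i (pd 0 u) x) +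
        ((if 0 = i then 1 else 0) * pd 1 u x + x 0 * pd i (pd 1 u) x) := by
    unfold angularDeriv
    simp only [neg_mul]
    rw [pd_add (differentiableAt_coord_mul (hpd 0) 1).fun_neg
      (differentiableAt_coord_mul (hpd 1) 0), pd_neg, pd_coord_mul (hpd 0), pd_coord_mul (hpd 1)]
  rw [hexpand, pd_comm hu i 0, pd_comm hu i 1, angularDeriv]
  fin_cases i <;>
    simp only [Fin.zero_eta, Fin.mk_one, zero_ne_one, one_ne_zero, ↓reduceIte] <;> ring

theorem isConjugateAt_angularDeriv_mul_eulerDeriv (ha : DifferentiableAt ℝ a x)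
    (hu : ContDiffAt ℝ 2 u x) (hrad : angularDeriv a x = 0)
    (heq : a x * (pd 0 (pd 0 u) x + pd 1 (pd 1 u) x)
      + (pd 0 a x * pd 0 u x + pd 1 a x * pd 1 u x) = 0) :
    IsConjugateAt a (angularDeriv u) (fun y => a y * eulerDeriv u y) x := by
  have hpdR := pd_mul ha (differentiableAt_eulerDeriv hu)
  have hcomm := pd_comm hu 0 1
  constructor
  · rw [hpdR, pd_eulerDeriv hu, pd_angularDeriv hu]
    simp only [angularDeriv, eulerDeriv, zero_ne_one, if_false] at hrad ⊢
    linear_combination x 0 * heq - pd 1 u x * hrad - a x * x 1 * hcomm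
  · rw [hpdR, pd_eulerDeriv hu, pd_angularDeriv hu]
    simp only [angularDeriv, eulerDeriv, if_true] at hrad ⊢
    linear_combination x 1 * heq + pd 0 u x * hrad + a x * x 0 * hcomm

end Derivations

theorem mul_laplacian_sub_grad_eq_zero_of_isConjugateAt {a T R : EuclideanSpace ℝ (Fin 2) → ℝ}
    {x : EuclideanSpace ℝ (Fin 2)} (ha : DifferentiableAt ℝ a x) (hT : ContDiffAt ℝ 2 T x)
    (hconj : ∀ᶠ y in 𝓝 x, IsConjugateAt a T R y) :
    a x * (pd 0 (pd 0 R) x + pd 1 (pd 1 R) x)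
      - (pd 0 a x * pd 0 R x + pd 1 a x * pd 1 R x) = 0 := by
  have hpd := differentiableAt_pd hT
  have h00 : pd 0 (pd 0 R) x = -(pd 0 a x * pd 1 T x + a x * pd 0 (pd 1 T) x) := by
    rw [pd_congr_of_eventuallyEq (hconj.mono fun _ h => h.pd_zero_eq), pd_neg, pd_mul ha (hpd 1)]
  have h11 : pd 1 (pd 1 R) x = pd 1 a x * pd 0 T x + a x * pd 1 (pd 0 T) x := by
    rw [pd_congr_of_eventuallyEq (hconj.mono fun _ h => h.pd_one_eq), pd_mul ha (hpd 0)]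
  rw [h00, h11, hconj.self_of_nhds.pd_zero_eq, hconj.self_of_nhds.pd_one_eq, pd_comm hT 1 0]
  ring

theorem stmt3_general {U : Set (EuclideanSpace ℝ (Fin 2))} (hU : IsOpen U)
    {a u R : EuclideanSpace ℝ (Fin 2) → ℝ} (ha : DifferentiableOn ℝ a U)
    (hrad : ∀ x ∈ U, angularDeriv a x = 0) (hu : ContDiffOn ℝ 3 u U)
    (heq : ∀ x ∈ U, a x * (pd 0 (pd 0 u) x + pd 1 (pd 1 u) x)
      + (pd 0 a x * pd 0 u x + pd 1 a x * pd 1 u x) = 0)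
    (hR : ∀ x ∈ U, R x = a x * eulerDeriv u x) :
    ∀ x ∈ U, a x * (pd 0 (pd 0 R) x + pd 1 (pd 1 R) x)
      - (pd 0 a x * pd 0 R x + pd 1 a x * pd 1 R x) = 0 := by
  intro x hx
  have ha' : ∀ y ∈ U, DifferentiableAt ℝ a y := fun y hy => ha.differentiableAt (hU.mem_nhds hy)
  have hu' : ∀ y ∈ U, ContDiffAt ℝ 3 u y := fun y hy => hu.contDiffAt (hU.mem_nhds hy)
  have hconj : ∀ y ∈ U, IsConjugateAt a (angularDeriv u) R y := fun y hy =>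
    (isConjugateAt_angularDeriv_mul_eulerDeriv (ha' y hy) ((hu' y hy).of_le (by norm_num))
      (hrad y hy) (heq y hy)).congr_of_eventuallyEq (Filter.eventually_of_mem (hU.mem_nhds hy) hR)
  exact mul_laplacian_sub_grad_eq_zero_of_isConjugateAt (ha' x hx)
    (contDiffAt_angularDeriv (hu' x hx) (by norm_num))
    (Filter.eventually_of_mem (hU.mem_nhds hx) hconj)

/-- Lemma 3.1 (second part): the radial quantity `R = a(x₁ u₁ + x₂ u₂)` satisfies
`a ΔR − ∇a · ∇R = 0` on `U`. -/
theorem stmt3 (U : Set (EuclideanSpace ℝ (Fin 2))) (hU : IsOpen U)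
    (a u : EuclideanSpace ℝ (Fin 2) → ℝ)
    (ha : ContDiffOn ℝ (⊤ : ℕ∞) a U) (hapos : ∀ x ∈ U, 0 < a x)
    (hrad : ∀ x ∈ U, -(x 1) * pd 0 a x + x 0 * pd 1 a x = 0)
    (hu : ContDiffOn ℝ (⊤ : ℕ∞) u U)
    (heq : ∀ x ∈ U, a x * (pd 0 (pd 0 u) x + pd 1 (pd 1 u) x)
      + (pd 0 a x * pd 0 u x + pd 1 a x * pd 1 u x) = 0)
    (R : EuclideanSpace ℝ (Fin 2) → ℝ)
    (hR : ∀ x, R x = a x * (x 0 * pd 0 u x + x 1 * pd 1 u x)) :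
    ∀ x ∈ U, a x * (pd 0 (pd 0 R) x + pd 1 (pd 1 R) x)
      - (pd 0 a x * pd 0 R x + pd 1 a x * pd 1 R x) = 0 := by
  exact stmt3_general hU (ha.differentiableOn (by simp)) hrad (contDiffOn_infty.1 hu 3) heq
    fun x _ => hR x
end
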